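/- Let T be a finite tree on a finite vertex set that is not a path graph. Then there exist two distinct leaves u and v of T (vertices of degree 1) such that the vertex of degree ≥ 3 nearest to u along the unique path from u into the tree coincides with the vertex of degree ≥ 3 nearest to v; equivalently, there is a vertex w of degree ≥ 3 in T and two paths in T from w to the leaves u and v respectively, which intersect only at w and all of whose vertices other than w and the leaf endpoints have degree 2 in T. -/

import Mathlib

open SimpleGraph

/-!
The proof is extremal. A longest path in a tree all of whose degrees are at most `2` has to pass
through every vertex, and acyclicity forbids chords, so such a tree is a path graph
(`exists_iso_pathGraph_of_degree_le_two`). Hence a vertex of degree at least `3` exists.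

Fix a root `r`, and among all paths from `r` to vertices of degree at least `3` choose a longest
one, `P`, ending at `w`. At most one neighbour of `w` lies on `P`, so two neighbours `a ≠ b` of
`w` lie off `P`. Prolonging `P` through `a`, respectively through `b`, as far as possible
ends at leaves (`exists_maximal_extension`); by maximality of `P`, no vertex strictly beyond `w` has
degree at least `3`, so both arms are bare (`exists_bare_arm`). The arms meet only at `w`, since
paths in a forest are unique and the arms leave `w` through different neighbours.
-/

/-- A nonempty set of natural numbers which is bounded above has a greatest element. -/
lemma exists_greatest_of_bounded (P : ℕ → Prop) (B : ℕ) (hne : ∃ n, P n)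
    (hB : ∀ n, P n → n ≤ B) : ∃ n, P n ∧ ∀ m, P m → m ≤ n := by
  classical
  obtain ⟨n, hn⟩ := hne
  exact ⟨Nat.findGreatest P B, Nat.findGreatest_spec (hB n hn) hn,
    fun m hm => Nat.le_findGreatest (hB m hm) hm⟩

section Paths

variable {V : Type*} {T : SimpleGraph V}

/-- A path in a forest has no chords. -/
lemma eq_succ_of_adj_getVert (hT : T.IsAcyclic) {u v : V} {p : T.Walk u v} (hp : p.IsPath)
    {i j : ℕ} (hij : i < j) (hj : j ≤ p.length) (h : T.Adj (p.getVert i) (p.getVert j)) :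
    j = i + 1 := by
  have hmem : p.getVert j ∈ (p.drop i).support := by
    rw [Walk.mem_support_iff_exists_getVert]
    refine ⟨j - i, ?_, ?_⟩
    · rw [Walk.drop_getVert]; congr 1; omega
    · rw [Walk.drop_length]; omega
  have := hT.eq_snd_of_adj_start (hp.drop i) h hmem
  rw [Walk.snd, Walk.drop_getVert] at this
  exact hp.getVert_injOn hj (show i + 1 ≤ p.length by omega) this

/-- The two neighbours along a path of a vertex interior to it are distinct. -/
lemma exists_two_neighbors_of_interior {u v x : V} {p : T.Walk u v} (hp : p.IsPath)
    (hx : x ∈ p.support) (hxu : x ≠ u) (hxv : x ≠ v) :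
    ∃ a ∈ p.support, ∃ b ∈ p.support, a ≠ b ∧ T.Adj x a ∧ T.Adj x b := by
  obtain ⟨n, rfl, hn⟩ := Walk.mem_support_iff_exists_getVert.1 hx
  have h0 : n ≠ 0 := by rintro rfl; simp at hxu
  have h1 : n ≠ p.length := by rintro rfl; simp at hxv
  obtain ⟨k, rfl⟩ := Nat.exists_eq_succ_of_ne_zero h0
  refine ⟨_, p.getVert_mem_support k, _, p.getVert_mem_support (k + 2), fun he => ?_,
    (p.adj_getVert_succ (by omega)).symm, p.adj_getVert_succ (by omega)⟩
  have := hp.getVert_injOn (show k ≤ p.length by omega) (show k + 2 ≤ p.length by omega) he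
  omega

/-- Every path can be prolonged to one whose final vertex has all its neighbours on the path. -/
lemma exists_maximal_extension [Fintype V] {r w : V} (P : T.Walk r w) (hP : P.IsPath) :
    ∃ (u : V) (q : T.Walk w u), (P.append q).IsPath ∧
      ∀ y, T.Adj u y → y ∈ (P.append q).support := by
  obtain ⟨n, ⟨u, q, hq, rfl⟩, hmax⟩ := exists_greatest_of_bounded
    (fun n => ∃ (u : V) (q : T.Walk w u), (P.append q).IsPath ∧ (P.append q).length = n)
    (Fintype.card V) ⟨P.length, w, .nil, by simpa using hP, by simp⟩
    (by rintro _ ⟨u, q, hq, rfl⟩; exact hq.length_lt.le)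
  refine ⟨u, q, hq, fun y hy => ?_⟩
  by_contra hmem
  have := hmax _ ⟨y, q.concat hy, by
    rw [Walk.append_concat]; exact hq.concat hmem hy, rfl⟩
  simp at this

end Paths

section Finite

variable {V : Type*} [Fintype V] {T : SimpleGraph V} [DecidableRel T.Adj]

lemma two_le_degree_of_interior {u v x : V} {p : T.Walk u v} (hp : p.IsPath)
    (hx : x ∈ p.support) (hxu : x ≠ u) (hxv : x ≠ v) : 2 ≤ T.degree x := by
  obtain ⟨a, -, b, -, hab, ha, hb⟩ := exists_two_neighbors_of_interior hp hx hxu hxv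
  rw [← T.card_neighborFinset_eq_degree]
  exact Finset.one_lt_card.2 ⟨a, by simpa using ha, b, by simpa using hb, hab⟩

/-- A tree with all degrees at most `2` is a path graph: a longest path in it is a Hamiltonian
path without chords. -/
lemma exists_iso_pathGraph_of_degree_le_two (hconn : T.Connected) (hT : T.IsAcyclic)
    (hdeg : ∀ x, T.degree x ≤ 2) : ∃ m : ℕ, Nonempty (T ≃g pathGraph m) := by
  classical
  obtain ⟨r⟩ := hconn.nonempty
  obtain ⟨n, ⟨u, v, p, hp, rfl⟩, hmax⟩ := exists_greatest_of_bounded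
    (fun n => ∃ (u v : V) (p : T.Walk u v), p.IsPath ∧ p.length = n) (Fintype.card V)
    ⟨0, r, r, .nil, .nil, rfl⟩ (by rintro _ ⟨u, v, p, hp, rfl⟩; exact hp.length_lt.le)
  have hall : ∀ y, y ∈ p.support := by
    intro y
    by_contra hy
    obtain ⟨q⟩ := hconn.preconnected u y
    obtain ⟨d, -, hd1, hd2⟩ :=
      q.exists_boundary_dart {x | x ∈ p.support} p.start_mem_support hy
    obtain ⟨⟨x, z⟩, hxz⟩ := d
    change x ∈ p.support at hd1
    change z ∉ p.support at hd2
    change T.Adj x z at hxz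
    by_cases hxu : x = u
    · subst hxu
      have := hmax _ ⟨_, _, .cons hxz.symm p, hp.cons hd2, rfl⟩
      simp at this
    by_cases hxv : x = v
    · subst hxv
      have := hmax _ ⟨_, _, p.concat hxz, hp.concat hd2 hxz, rfl⟩
      simp at this
    obtain ⟨a, hap, b, hbp, hab, ha, hb⟩ := exists_two_neighbors_of_interior hp hd1 hxu hxv
    have h3 : 2 < (T.neighborFinset x).card :=
      Finset.two_lt_card.2 ⟨a, by simpa using ha, b, by simpa using hb, z, by simpa using hxz,
        hab, fun h => hd2 (h ▸ hap), fun h => hd2 (h ▸ hbp)⟩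
    rw [T.card_neighborFinset_eq_degree] at h3
    exact absurd (hdeg x) (by omega)
  let f : Fin (p.length + 1) → V := fun i => p.getVert i
  have hf : Function.Bijective f := by
    constructor
    · intro i j hij
      exact Fin.ext (hp.getVert_injOn (show i.1 ≤ p.length by omega)
        (show j.1 ≤ p.length by omega) hij)
    · intro y
      obtain ⟨n, hn, hle⟩ := Walk.mem_support_iff_exists_getVert.1 (hall y)
      exact ⟨⟨n, by omega⟩, hn⟩
  refine ⟨p.length + 1, ⟨(RelIso.symm ⟨Equiv.ofBijective f hf, ?_⟩)⟩⟩
  intro i j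
  change T.Adj (p.getVert i) (p.getVert j) ↔ _
  rw [pathGraph_adj]
  constructor
  · intro h
    rcases lt_trichotomy i.1 j.1 with hlt | heq | hlt
    · exact .inl (eq_succ_of_adj_getVert hT hp hlt (by omega) h).symm
    · rw [heq] at h; exact (h.ne rfl).elim
    · exact .inr (eq_succ_of_adj_getVert hT hp hlt (by omega) h.symm).symm
  · rintro (h | h)
    · rw [← h]; exact p.adj_getVert_succ (by omega)
    · rw [← h]; exact (p.adj_getVert_succ (by omega)).symm

/-- If no vertex of degree at least `3` ends a path from `r` longer than `P`, then through each
neighbour `a` of the endpoint `w` of `P` that lies off `P` there runs a path from `w` to a leaf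
with all interior vertices of degree `2`. -/
lemma exists_bare_arm (hT : T.IsAcyclic) {r w : V} (P : T.Walk r w) (hP : P.IsPath)
    (hmax : ∀ (x : V) (Q : T.Walk r x), Q.IsPath → 3 ≤ T.degree x → Q.length ≤ P.length)
    {a : V} (ha : T.Adj w a) (haP : a ∉ P.support) :
    ∃ (u : V) (p : T.Walk w u), p.IsPath ∧ p.snd = a ∧ u ≠ w ∧ T.degree u = 1 ∧
      ∀ x ∈ p.support, x ≠ w → x ≠ u → T.degree x = 2 := by
  classical
  obtain ⟨u, q, hq, hend⟩ := exists_maximal_extension (P.concat ha) (hP.concat haP ha)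
  rw [Walk.concat_append] at hq hend
  have hp := hq.of_append_right
  have huw : u ≠ w := by
    rintro rfl
    exact ((Walk.cons_isPath_iff _ _).1 hp).2 q.end_mem_support
  refine ⟨u, .cons ha q, hp, by simp, huw, ?_, fun x hx hxw hxu => ?_⟩
  · have hle : (T.neighborFinset u).card ≤ 1 := by
      refine Finset.card_le_one.2 fun y hy z hz => ?_
      rw [mem_neighborFinset] at hy hz
      rw [hT.eq_penultimate_of_adj_end hq hy (hend y hy),
        hT.eq_penultimate_of_adj_end hq hz (hend z hz)]
    have hpos : 0 < (T.neighborFinset u).card :=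
      Finset.card_pos.2 ⟨_, by
        simpa using ((Walk.cons ha q).adj_penultimate (by simp)).symm⟩
    rw [T.card_neighborFinset_eq_degree] at hle hpos
    omega
  · have h2 := two_le_degree_of_interior hp hx hxw hxu
    by_contra hne
    have hpath : (P.append ((Walk.cons ha q).takeUntil x hx)).IsPath := by
      rw [← Walk.take_spec (Walk.cons ha q) hx, Walk.append_assoc] at hq
      exact hq.of_append_left
    have hlen := hmax x _ hpath (by omega)
    rw [Walk.length_append] at hlen
    exact hxw (Walk.eq_of_length_eq_zero (p := (Walk.cons ha q).takeUntil x hx) (by omega)).symm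

end Finite

/-- In a finite tree which is not a path graph, there exist two distinct leaves
`u, v` sharing the same nearest branch vertex: there is a vertex `w` of degree `≥ 3` and
paths from `w` to `u` and from `w` to `v` which intersect only at `w`, all of whose vertices
other than `w` and the leaf endpoints have degree `2`. -/
theorem tree_two_leaves_same_branch_vertex {V : Type*} [Fintype V]
    (T : SimpleGraph V) [DecidableRel T.Adj]
    (hconn : T.Connected) (hacyclic : T.IsAcyclic)
    (hnotpath : ¬ ∃ m : ℕ, Nonempty (T ≃g pathGraph m)) :
    ∃ (u v w : V) (p : T.Walk w u) (q : T.Walk w v),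
      u ≠ v ∧
      T.degree u = 1 ∧
      T.degree v = 1 ∧
      3 ≤ T.degree w ∧
      p.IsPath ∧ q.IsPath ∧
      {x | x ∈ p.support} ∩ {x | x ∈ q.support} = {w} ∧
      (∀ x ∈ p.support, x ≠ w → x ≠ u → T.degree x = 2) ∧
      (∀ x ∈ q.support, x ≠ w → x ≠ v → T.degree x = 2) := by
  classical
  obtain ⟨w₀, hw₀⟩ : ∃ w, 3 ≤ T.degree w := by
    by_contra! h
    exact hnotpath (exists_iso_pathGraph_of_degree_le_two hconn hacyclic
      fun x => Nat.le_of_lt_succ (h x))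
  -- Rooting the tree at `w₀` makes the trivial path a candidate for the maximum.
  obtain ⟨n, ⟨w, P, hP, hw, rfl⟩, hmax⟩ := exists_greatest_of_bounded
    (fun n => ∃ (w : V) (P : T.Walk w₀ w), P.IsPath ∧ 3 ≤ T.degree w ∧ P.length = n)
    (Fintype.card V) ⟨0, w₀, .nil, .nil, hw₀, rfl⟩
    (by rintro _ ⟨w, P, hP, -, rfl⟩; exact hP.length_lt.le)
  have hmax' : ∀ (x : V) (Q : T.Walk w₀ x), Q.IsPath → 3 ≤ T.degree x → Q.length ≤ P.length :=
    fun x Q hQ hx => hmax _ ⟨x, Q, hQ, hx, rfl⟩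
  -- A neighbour of `w` on `P` can only be `P.penultimate`; removing it leaves two others.
  have hcard : 1 < ((T.neighborFinset w).erase P.penultimate).card := by
    have := Finset.pred_card_le_card_erase (s := T.neighborFinset w) (a := P.penultimate)
    rw [T.card_neighborFinset_eq_degree] at this
    omega
  obtain ⟨a, ha, b, hb, hab⟩ := Finset.one_lt_card.1 hcard
  rw [Finset.mem_erase, mem_neighborFinset] at ha hb
  obtain ⟨u, p, hp, hpa, huw, hu, hp2⟩ := exists_bare_arm hacyclic P hP hmax' ha.2
    fun h => ha.1 (hacyclic.eq_penultimate_of_adj_end hP ha.2 h)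
  obtain ⟨v, q, hq, hqb, hvw, hv, hq2⟩ := exists_bare_arm hacyclic P hP hmax' hb.2
    fun h => hb.1 (hacyclic.eq_penultimate_of_adj_end hP hb.2 h)
  have hinter : ∀ x, x ∈ p.support → x ∈ q.support → x = w := by
    intro x hxp hxq
    by_contra hxw
    have heq : p.takeUntil x hxp = q.takeUntil x hxq := congrArg Subtype.val
      ((hacyclic.subsingleton_path w x).elim ⟨_, hp.takeUntil hxp⟩ ⟨_, hq.takeUntil hxq⟩)
    apply hab
    rw [← hpa, ← hqb, ← Walk.snd_takeUntil hxw p hxp, heq, Walk.snd_takeUntil hxw q hxq]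
  refine ⟨u, v, w, p, q, ?_, hu, hv, hw, hp, hq, ?_, hp2, hq2⟩
  · rintro rfl
    exact huw (hinter u p.end_mem_support q.end_mem_support)
  · ext x
    constructor
    · rintro ⟨h1, h2⟩
      exact hinter x h1 h2
    · rintro rfl
      exact ⟨p.start_mem_support, q.start_mem_support⟩
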